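/- Let G be a group acting on a unital associative ℂ-algebra A by ℂ-algebra automorphisms, with invariant subalgebra A₀ = A^G, and suppose A is a semisimple G-module. Let V be a (G,A)-module such that (1) V is irreducible (simple) as an A-module, and (2) as a G-module, V is a direct sum of at most countably many finite-dimensional irreducible G-submodules. Then for every finite-dimensional irreducible G-module M whose isotypic component V_M in V is nonzero, V_M is an irreducible (G,A₀)-module, i.e. V_M has no nonzero proper subspace invariant under both the G-action and the A₀-action; equivalently, V^M = Hom_{ℂ[G]}(M, V) is irreducible (simple) as an A₀-module. -/

import Mathlib

/-!
Let `e₁, e₂ : M → V` be `G`-equivariant with `e₁` injective. As `V` has countable dimension, Schur's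
lemma in the Amitsur–Dixmier form gives `End_A V = ℂ` (`end_eq_scalar`), so Jacobson density
provides `a ∈ A` with `a • e₁ m = e₂ m` for all `m` (`exists_smul_eq_of_injective`). The annihilator
`W` of `e₁ M` in `A` is `G`-stable; let `b` be the component of `a` in a `G`-stable complement `W'`.
Then `b • e₁ m = e₂ m`, and `g b - b` lies in `W' ∩ W = 0` because `g b` also carries `e₁` to `e₂`.
So `b ∈ A₀` (`exists_invariant_smul_eq`).

A nonzero `G`-stable `U ≤ V_M` contains a copy `e₁ M` of `M` (`exists_equivariant_embedding`). If `U`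
is also `A₀`-stable, then it contains every copy `e₂ M` of `M`, hence all of `V_M`.
-/
open Polynomial

/-- A sum of countably many finite-dimensional subspaces has countable dimension, so it contains
no uncountable linearly independent family. -/
theorem countable_of_linearIndependent {ι κ V : Type*} [Countable ι] [AddCommGroup V] [Module ℂ V]
    (W : ι → Submodule ℂ V) (hfd : ∀ i, FiniteDimensional ℂ (W i)) (htop : ⨆ i, W i = ⊤)
    (w : κ → V) (hw : LinearIndependent ℂ w) : Countable κ := by
  choose s hs using fun i => (Submodule.fg_iff_finiteDimensional (W i)).2 (hfd i)
  have hspan : Submodule.span ℂ (⋃ i, (s i : Set V)) = ⊤ := by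
    rw [Submodule.span_iUnion, ← htop]
    simp [hs]
  have hc : (⋃ i, (s i : Set V)).Countable :=
    Set.countable_iUnion fun i => (s i).countable_toSet
  have hr : Module.rank ℂ V ≤ Cardinal.aleph0 := by
    rw [← rank_top, ← hspan]
    exact (rank_span_le _).trans hc.le_aleph0
  have h := hw.cardinal_lift_le_rank
  rw [← Cardinal.mk_le_aleph0_iff, ← Cardinal.lift_le_aleph0]
  refine h.trans ?_
  rw [Cardinal.lift_le_aleph0]
  exact hr

/-- Schur's lemma in the Amitsur–Dixmier form. If an `A`-endomorphism `d` of the simple module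
`V` were not a scalar, every `d - c` would be invertible, and for `v ≠ 0` the vectors
`(d - c)⁻¹ v`, `c ∈ ℂ`, would be linearly independent: clearing denominators in a linear relation
gives a nonzero polynomial in `d` that kills `v`. The hypothesis `hV` holds when `V` has countable
dimension. -/
theorem end_eq_scalar {A V : Type*} [Ring A] [Algebra ℂ A] [AddCommGroup V] [Module ℂ V]
    [Module A V] [IsScalarTower ℂ A V] [IsSimpleModule A V]
    (hV : ∀ w : ℂ → V, ¬ LinearIndependent ℂ w) (d : Module.End A V) :
    ∃ c : ℂ, ∀ v, d v = c • v := by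
  classical
  by_contra hne
  push Not at hne
  have hV0 : Nontrivial V := IsSimpleModule.nontrivial A V
  obtain ⟨v, hv⟩ := exists_ne (0 : V)
  have hshift : ∀ c : ℂ, d - algebraMap ℂ (Module.End A V) c ≠ 0 := by
    intro c hc
    obtain ⟨x, hx⟩ := hne c
    exact hx (by simpa [sub_eq_zero] using congr($hc x))
  -- If `p(d) v = 0` with `p ≠ 0`, then `p(d) = 0` by Schur, so `d` is algebraic over `ℂ`, its
  -- minimal polynomial is linear, and `d` is a scalar.
  have hpoly : ∀ p : ℂ[X], p ≠ 0 → aeval d p v ≠ 0 := by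
    intro p hp h0
    have hp0 : aeval d p = 0 := by
      by_contra h
      exact hv (LinearMap.injective_of_ne_zero h (by simpa using h0))
    have hint : IsIntegral ℂ d := IsAlgebraic.isIntegral ⟨p, hp, hp0⟩
    have hdeg := IsAlgClosed.degree_eq_one_of_irreducible ℂ (minpoly.irreducible hint)
    have hz := minpoly.aeval ℂ d
    rw [eq_X_add_C_of_degree_eq_one hdeg, (minpoly.monic hint).leadingCoeff] at hz
    apply hshift (-(minpoly ℂ d).coeff 0)
    simpa using hz
  choose w hw using fun c => (LinearMap.bijective_of_ne_zero (hshift c)).2 v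
  refine hV w (linearIndependent_iff'.2 fun s a hs c hc => ?_)
  by_contra hac
  -- The relation `∑ a b • (d - b)⁻¹ v = 0` multiplied by `∏ (d - e)`; the resulting polynomial is
  -- nonzero because its value at `c` is `a c * ∏ (c - e)` over `e ≠ c`.
  refine hpoly (∑ b ∈ s, C (a b) * ∏ e ∈ s.erase b, (X - C e)) ?_ ?_
  · intro h
    have := congr(eval c $h)
    rw [eval_finsetSum, Finset.sum_eq_single_of_mem c hc] at this
    · simp only [eval_mul, eval_C, eval_prod, eval_sub, eval_X, eval_zero, mul_eq_zero, hac,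
        false_or, Finset.prod_eq_zero_iff] at this
      obtain ⟨e, he, h⟩ := this
      exact (Finset.ne_of_mem_erase he) (sub_eq_zero.1 h).symm
    · intro b hb hbc
      simp only [eval_mul, eval_prod]
      rw [Finset.prod_eq_zero (Finset.mem_erase.2 ⟨hbc.symm, hc⟩) (by simp), mul_zero]
  · have key : ∀ b ∈ s, aeval d (C (a b) * ∏ e ∈ s.erase b, (X - C e)) v
        = aeval d (∏ e ∈ s, (X - C e)) (a b • w b) := by
      intro b hb
      rw [← Finset.prod_erase_mul s _ hb]
      conv_lhs => rw [← hw b]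
      simp only [map_mul, map_sub, aeval_X, aeval_C, Module.End.mul_apply]
      rw [← Module.End.mul_apply, Algebra.commutes]
      simp [smul_sub]
    rw [map_sum, LinearMap.sum_apply, Finset.sum_congr rfl key, ← map_sum, hs, map_zero]

/-- Jacobson density over `ℂ`: since `End_A V = ℂ`, the linear map `e₂ ∘ e₁⁻¹` on the
finite-dimensional space `e₁ M` is the action of an element of `A`. -/
theorem exists_smul_eq_of_injective {A V : Type*} [Ring A] [Algebra ℂ A] [AddCommGroup V] [Module ℂ V]
    [Module A V] [IsScalarTower ℂ A V] [IsSimpleModule A V]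
    (hV : ∀ w : ℂ → V, ¬ LinearIndependent ℂ w)
    {M : Type*} [AddCommGroup M] [Module ℂ M] [FiniteDimensional ℂ M]
    (e₁ e₂ : M →ₗ[ℂ] V) (h₁ : Function.Injective e₁) :
    ∃ a : A, ∀ m, a • e₁ m = e₂ m := by
  obtain ⟨p, hp⟩ := e₁.exists_leftInverse_of_injective (LinearMap.ker_eq_bot.2 h₁)
  let f : Module.End (Module.End A V) V :=
    { toFun := e₂ ∘ₗ p
      map_add' := map_add _
      map_smul' := fun d v => by
        obtain ⟨c, hc⟩ := end_eq_scalar hV d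
        simp [Module.End.smul_def, hc] }
  obtain ⟨s, hs⟩ := Module.Finite.fg_top (R := ℂ) (M := M)
  classical
  obtain ⟨a, ha⟩ := jacobson_density f (s.image e₁)
  refine ⟨a, fun m => ?_⟩
  have : m ∈ Submodule.span ℂ (s : Set M) := hs ▸ Submodule.mem_top
  induction this using Submodule.span_induction with
  | mem m hm =>
    rw [← ha _ (Finset.mem_image_of_mem _ hm)]
    exact congr(e₂ ($hp m))
  | zero => simp
  | add _ _ _ _ h₁ h₂ => simp [h₁, h₂]
  | smul c x _ h => rw [map_smul, map_smul, ← h, smul_comm]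

/-- If some `a ∈ A` carries an equivariant map `e₁` to an equivariant map `e₂`, then so does a
`G`-invariant element: the component of `a` in a `G`-stable complement of the annihilator of
`e₁ M`. -/
theorem exists_invariant_smul_eq {G A V M : Type*} [Group G] [Ring A] [Algebra ℂ A]
    (φ : G →* (A ≃ₐ[ℂ] A)) [AddCommGroup V] [Module ℂ V] [Module A V] [IsScalarTower ℂ A V]
    (ρ : G →* (V ≃ₗ[ℂ] V))
    (hequiv : ∀ (g : G) (a : A) (v : V), ρ g (a • v) = (φ g a) • (ρ g v))
    (hss : ∀ W : Submodule ℂ A, (∀ g : G, ∀ a ∈ W, φ g a ∈ W) →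
        ∃ W' : Submodule ℂ A, (∀ g : G, ∀ a ∈ W', φ g a ∈ W') ∧ W ⊓ W' = ⊥ ∧ W ⊔ W' = ⊤)
    [AddCommGroup M] [Module ℂ M] (σ : G →* (M ≃ₗ[ℂ] M)) (e₁ e₂ : M →ₗ[ℂ] V)
    (he₁ : ∀ g m, e₁ (σ g m) = ρ g (e₁ m)) (he₂ : ∀ g m, e₂ (σ g m) = ρ g (e₂ m))
    (a : A) (ha : ∀ m, a • e₁ m = e₂ m) :
    ∃ b : A, (∀ g, φ g b = b) ∧ ∀ m, b • e₁ m = e₂ m := by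
  have hmove : ∀ (g : G) (b : A) (m : M), φ g b • e₁ m = ρ g (b • e₁ (σ g⁻¹ m)) := by
    intro g b m
    rw [hequiv, ← he₁, ← LinearEquiv.mul_apply, ← map_mul]
    simp
  let W : Submodule ℂ A :=
    { carrier := {b | ∀ m, b • e₁ m = 0}
      add_mem' := fun hx hy m => by rw [add_smul, hx, hy, add_zero]
      zero_mem' := fun m => zero_smul _ _
      smul_mem' := fun c x hx m => by rw [smul_assoc, hx, smul_zero] }
  obtain ⟨W', hW', hinf, hsup⟩ := hss W fun g b hb m => by rw [hmove, hb, map_zero]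
  obtain ⟨x, hx, b, hb, hxb⟩ := Submodule.mem_sup.1 (hsup ▸ Submodule.mem_top : a ∈ W ⊔ W')
  have hbe : ∀ m, b • e₁ m = e₂ m := by
    intro m
    rw [← ha, ← hxb, add_smul, hx, zero_add]
  refine ⟨b, fun g => ?_, hbe⟩
  have hmem : φ g b - b ∈ W ⊓ W' := by
    refine ⟨fun m => ?_, W'.sub_mem (hW' g b hb) hb⟩
    rw [sub_smul, hmove, hbe, hbe, ← he₂, ← LinearEquiv.mul_apply, ← map_mul]
    simp
  rw [hinf, Submodule.mem_bot] at hmem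
  exact sub_eq_zero.1 hmem

theorem exists_embedding_of_le_isotypicComponent {R V M : Type*} [Ring R] [AddCommGroup V]
    [Module R V] [AddCommGroup M] [Module R M] [IsSimpleModule R M] (U : Submodule R V)
    (hU : U ≠ ⊥) (hle : U ≤ isotypicComponent R V M) :
    ∃ f : M →ₗ[R] V, Function.Injective f ∧ ∀ m, f m ∈ U := by
  have h := (IsIsotypicOfType.isotypicComponent R V M).of_injective
    (Submodule.inclusion hle) (Submodule.inclusion_injective hle)
  have := IsSemisimpleModule.of_injective
    (Submodule.inclusion hle) (Submodule.inclusion_injective hle)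
  have : Nontrivial U := Submodule.nontrivial_iff_ne_bot.2 hU
  obtain ⟨S, hS⟩ := IsSemisimpleModule.exists_simple_submodule R U
  obtain ⟨e⟩ := h S
  exact ⟨U.subtype ∘ₗ S.subtype ∘ₗ e.symm.toLinearMap,
    U.subtype_injective.comp (S.subtype_injective.comp e.symm.injective), fun m => by simp⟩

open Representation in
/-- The translation of `exists_embedding_of_le_isotypicComponent` from `ℂ[G]`-modules to spaces
with a `G`-action: a nonzero `G`-stable subspace of the `M`-isotypic component contains a copy
of `M`. -/
theorem exists_equivariant_embedding {G V M : Type*} [Group G]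
    [AddCommGroup V] [Module ℂ V] (ρ : G →* (V ≃ₗ[ℂ] V))
    [AddCommGroup M] [Module ℂ M] [Nontrivial M] (σ : G →* (M ≃ₗ[ℂ] M))
    (hMirr : ∀ U : Submodule ℂ M, (∀ g : G, ∀ m ∈ U, σ g m ∈ U) → U = ⊥ ∨ U = ⊤)
    (U : Submodule ℂ V) (hU : U ≠ ⊥) (hUG : ∀ g : G, ∀ v ∈ U, ρ g v ∈ U)
    (hle : U ≤ sSup {W : Submodule ℂ V |
        (∀ g : G, ∀ v ∈ W, ρ g v ∈ W) ∧
        ∃ e : M ≃ₗ[ℂ] W, ∀ (g : G) (m : M), (e (σ g m) : V) = ρ g (e m)}) :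
    ∃ f : M →ₗ[ℂ] V, Function.Injective f ∧ (∀ m, f m ∈ U) ∧
      ∀ g m, f (σ g m) = ρ g (f m) := by
  let ρ' : Representation ℂ G V := (LinearEquiv.automorphismGroup.toLinearMapMonoidHom).comp ρ
  let σ' : Representation ℂ G M := (LinearEquiv.automorphismGroup.toLinearMapMonoidHom).comp σ
  have hirr : IsIrreducible σ' :=
    { exists_pair_ne := ⟨⊥, ⊤, fun h => by
        obtain ⟨m, hm⟩ := exists_ne (0 : M)
        have : m ∈ (⊥ : Subrepresentation σ') := h ▸ (trivial : m ∈ (⊤ : Subrepresentation σ'))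
        exact hm this⟩
      eq_bot_or_eq_top := fun N => by
        refine (hMirr N.toSubmodule fun g m hm => N.apply_mem_toSubmodule g hm).imp ?_ ?_
        · exact fun h => Subrepresentation.toSubmodule_injective h
        · exact fun h => Subrepresentation.toSubmodule_injective h }
  let U' : Subrepresentation ρ' := ⟨U, fun g v hv => hUG g v hv⟩
  let I : Subrepresentation ρ' := Subrepresentation.ofSubmodule'
    (isotypicComponent (MonoidAlgebra ℂ G) ρ'.asModule σ'.asModule)
  have hI : U ≤ I.toSubmodule := by
    refine hle.trans (sSup_le ?_)
    rintro W ⟨-, e, he⟩ v hv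
    let F : IntertwiningMap σ' ρ' :=
      ⟨W.subtype ∘ₗ e.toLinearMap, fun g => LinearMap.ext fun m => he g m⟩
    let F' := IntertwiningMap.equivLinearMapAsModule σ' ρ' F
    have hF' : Function.Injective F' := W.subtype_injective.comp e.injective
    have hr : LinearMap.range F' ≤
        isotypicComponent (MonoidAlgebra ℂ G) ρ'.asModule σ'.asModule :=
      le_sSup ⟨(LinearEquiv.ofInjective F' hF').symm⟩
    refine hr ⟨e.symm ⟨v, hv⟩, ?_⟩
    change ((e (e.symm ⟨v, hv⟩) : W) : V) = v
    simp
  obtain ⟨f, hf, hfU⟩ := exists_embedding_of_le_isotypicComponent (R := MonoidAlgebra ℂ G)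
    (V := ρ'.asModule) (M := σ'.asModule) (Subrepresentation.asSubmodule U')
    (fun h => hU ((Submodule.eq_bot_iff _).2 fun v hv => (Submodule.eq_bot_iff _).1 h v hv))
    (fun v hv => hI hv)
  let F := (IntertwiningMap.equivLinearMapAsModule σ' ρ').symm f
  exact ⟨F.toLinearMap, hf, hfU, fun g m => congr($(F.isIntertwining' g) m)⟩


/-- **(Kac–Radul, group version; Theorem 2.1 of the paper.)**
Let `G` be a group acting on a unital associative `ℂ`-algebra `A` by `ℂ`-algebra
automorphisms (via `φ`), with invariant subalgebra `A₀ = A^G`, and suppose `A` is a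
semisimple `G`-module (every `G`-invariant subspace of `A` has a `G`-invariant complement).
Let `V` be a `(G,A)`-module (i.e. `g • (a • v) = (g • a) • (g • v)`) such that
(1) `V` is irreducible as an `A`-module, and (2) as a `G`-module, `V` is a direct sum of at
most countably many finite-dimensional irreducible `G`-submodules.  Then for every
finite-dimensional irreducible `G`-module `M` whose isotypic component `V_M` (the sum of
all `G`-submodules of `V` isomorphic to `M`) is nonzero, `V_M` is an irreducible
`(G,A₀)`-module: it has no nonzero proper subspace invariant under both the `G`-action and
the `A₀`-action. -/
theorem statement1
    (G : Type*) [Group G]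
    (A : Type*) [Ring A] [Algebra ℂ A]
    (φ : G →* (A ≃ₐ[ℂ] A))
    (V : Type*) [AddCommGroup V] [Module ℂ V] [Module A V] [IsScalarTower ℂ A V]
    (ρ : G →* (V ≃ₗ[ℂ] V))
    (hequiv : ∀ (g : G) (a : A) (v : V), ρ g (a • v) = (φ g a) • (ρ g v))
    -- `A` is a semisimple `G`-module:
    (hss : ∀ W : Submodule ℂ A, (∀ g : G, ∀ a ∈ W, φ g a ∈ W) →
        ∃ W' : Submodule ℂ A, (∀ g : G, ∀ a ∈ W', φ g a ∈ W') ∧ W ⊓ W' = ⊥ ∧ W ⊔ W' = ⊤)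
    -- (1) `V` is irreducible as an `A`-module:
    (hVsimple : IsSimpleModule A V)
    -- (2) `V` is a direct sum of at most countably many finite-dimensional irreducible
    -- `G`-submodules:
    (hdecomp : ∃ (ι : Type) (_ : Countable ι) (W : ι → Submodule ℂ V),
        (∀ i, ∀ g : G, ∀ v ∈ W i, ρ g v ∈ W i) ∧
        (∀ i, FiniteDimensional ℂ (W i)) ∧
        (∀ i, W i ≠ ⊥) ∧
        (∀ i, ∀ U : Submodule ℂ V, U ≤ W i → (∀ g : G, ∀ v ∈ U, ρ g v ∈ U) →
          U = ⊥ ∨ U = W i) ∧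
        iSupIndep W ∧ (⨆ i, W i) = ⊤)
    -- `M` is a finite-dimensional irreducible `G`-module:
    (M : Type*) [AddCommGroup M] [Module ℂ M] [FiniteDimensional ℂ M] [Nontrivial M]
    (σ : G →* (M ≃ₗ[ℂ] M))
    (hMirr : ∀ U : Submodule ℂ M, (∀ g : G, ∀ m ∈ U, σ g m ∈ U) → U = ⊥ ∨ U = ⊤)
    -- `VM` is the isotypic component of `M` in `V`: the sum of all `G`-invariant
    -- subspaces of `V` that are `G`-equivariantly isomorphic to `M`:
    (VM : Submodule ℂ V)
    (hVM : VM = sSup {W : Submodule ℂ V |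
        (∀ g : G, ∀ v ∈ W, ρ g v ∈ W) ∧
        ∃ e : M ≃ₗ[ℂ] W, ∀ (g : G) (m : M), (e (σ g m) : V) = ρ g (e m)})
    (hVMne : VM ≠ ⊥) :
    ∀ U : Submodule ℂ V, U ≤ VM →
      (∀ g : G, ∀ v ∈ U, ρ g v ∈ U) →
      (∀ a : A, (∀ g : G, φ g a = a) → ∀ v ∈ U, a • v ∈ U) →
      U = ⊥ ∨ U = VM := by
  intro U hUle hUG hUA
  obtain ⟨ι, _, W, -, hfd, -, -, -, htop⟩ := hdecomp
  have hV : ∀ w : ℂ → V, ¬ LinearIndependent ℂ w := fun w hw =>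
    not_countable_complex (Set.countable_univ_iff.2
      (countable_of_linearIndependent W hfd htop w hw))
  refine or_iff_not_imp_left.2 fun hU => le_antisymm hUle ?_
  obtain ⟨f, hf, hfU, hfG⟩ :=
    exists_equivariant_embedding ρ σ hMirr U hU hUG (hUle.trans hVM.le)
  rw [hVM]
  refine sSup_le ?_
  rintro N ⟨-, e, he⟩ v hv
  obtain ⟨a, ha⟩ := exists_smul_eq_of_injective (A := A) hV f (N.subtype ∘ₗ e.toLinearMap) hf
  obtain ⟨b, hbG, hb⟩ := exists_invariant_smul_eq φ ρ hequiv hss σ f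
    (N.subtype ∘ₗ e.toLinearMap) hfG he a ha
  have hvb : b • f (e.symm ⟨v, hv⟩) = v := by simp [hb]
  exact hvb ▸ hUA b hbG _ (hfU _)
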